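/- arXiv:1906.10567 — 4 statements merged into one kernel-verified Lean document; each statement's English description precedes it below -/
import Mathlib

section
/- Let γ : ℝ → ℝ³ be twice differentiable with ‖γ'(s)‖ = 1 for all s, and let n : ℝ → ℝ³ be differentiable with ‖n(s)‖ = 1 and ⟨n(s), γ'(s)⟩ = 0 for all s. Set τ := γ', u := n × τ, and define the geodesic curvature k_g := ⟨τ', u⟩, the normal curvature k_n := ⟨τ', n⟩, and the geodesic torsion t_g := ⟨n', τ × n⟩. Let Θ : ℝ → ℝ be differentiable with Θ'(s) = k_g(s) for every s, and define X(s) := cos Θ(s) · τ(s) − sin Θ(s) · u(s). Then X'(s) = (cos Θ(s) · k_n(s) − sin Θ(s) · t_g(s)) · n(s) for every s. -/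
/-!
The Darboux frame `(n, τ, u)` is orthonormal, so every vector is the sum of its components along
the frame (`darboux_expand`). Differentiating the constant inner products of the frame shows that
its derivative is skew, `⟪a', b⟫ = -⟪b', a⟫` for frame fields `a`, `b` (`inner_deriv_skew`), which
gives the Darboux equations `τ' = k_g u + k_n n` and `u' = -k_g τ + t_g n`; the sign of `t_g` comes
from `τ × n = -u`. In the product-rule expansion of `X'`, the tangential terms cancel
because `Θ' = k_g`, leaving `(cos Θ k_n - sin Θ t_g) n`.
-/

open scoped RealInnerProductSpace

noncomputable def e3 (a b c : ℝ) : EuclideanSpace ℝ (Fin 3) :=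
  (WithLp.equiv 2 (Fin 3 → ℝ)).symm ![a, b, c]

noncomputable def cross (v w : EuclideanSpace ℝ (Fin 3)) : EuclideanSpace ℝ (Fin 3) :=
  e3 (v 1 * w 2 - v 2 * w 1) (v 2 * w 0 - v 0 * w 2) (v 0 * w 1 - v 1 * w 0)

lemma inner_three (a b : EuclideanSpace ℝ (Fin 3)) :
    ⟪a, b⟫ = a 0 * b 0 + a 1 * b 1 + a 2 * b 2 := by
  simp only [PiLp.inner_apply, Fin.sum_univ_three, RCLike.inner_apply, conj_trivial]
  ring

lemma cross_zero (v w : EuclideanSpace ℝ (Fin 3)) : cross v w 0 = v 1 * w 2 - v 2 * w 1 := rfl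

lemma cross_one (v w : EuclideanSpace ℝ (Fin 3)) : cross v w 1 = v 2 * w 0 - v 0 * w 2 := rfl

lemma cross_two (v w : EuclideanSpace ℝ (Fin 3)) : cross v w 2 = v 0 * w 1 - v 1 * w 0 := rfl

lemma inner_left_cross (a b : EuclideanSpace ℝ (Fin 3)) : ⟪a, cross a b⟫ = 0 := by
  rw [inner_three, cross_zero, cross_one, cross_two]; ring

lemma inner_right_cross (a b : EuclideanSpace ℝ (Fin 3)) : ⟪b, cross a b⟫ = 0 := by
  rw [inner_three, cross_zero, cross_one, cross_two]; ring

/-- Lagrange's identity. -/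
lemma inner_cross_cross (a b : EuclideanSpace ℝ (Fin 3)) :
    ⟪cross a b, cross a b⟫ = ⟪a, a⟫ * ⟪b, b⟫ - ⟪a, b⟫ ^ 2 := by
  simp only [inner_three, cross_zero, cross_one, cross_two]; ring

lemma inner_cross_swap (v a b : EuclideanSpace ℝ (Fin 3)) :
    ⟪v, cross b a⟫ = -⟪v, cross a b⟫ := by
  simp only [inner_three, cross_zero, cross_one, cross_two]; ring

lemma norm_cross_eq_one {a b : EuclideanSpace ℝ (Fin 3)} (ha : ‖a‖ = 1) (hb : ‖b‖ = 1)
    (hab : ⟪a, b⟫ = 0) : ‖cross a b‖ = 1 := by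
  have h := inner_cross_cross a b
  simp only [real_inner_self_eq_norm_sq, ha, hb, hab] at h
  exact (pow_eq_one_iff_of_nonneg (norm_nonneg _) two_ne_zero).1 (by linarith)

/-- Two orthonormal vectors and their cross product form an orthonormal basis of `ℝ³`. -/
lemma darboux_expand {a b : EuclideanSpace ℝ (Fin 3)} (ha : ‖a‖ = 1) (hb : ‖b‖ = 1)
    (hab : ⟪a, b⟫ = 0) (v : EuclideanSpace ℝ (Fin 3)) :
    v = ⟪v, a⟫ • a + ⟪v, b⟫ • b + ⟪v, cross a b⟫ • cross a b := by
  have hc := norm_cross_eq_one ha hb hab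
  have hac := inner_left_cross a b
  have hbc := inner_right_cross a b
  have ho : Orthonormal ℝ ![a, b, cross a b] := by
    constructor
    · intro i
      fin_cases i <;> simp [ha, hb, hc]
    · intro i j hij
      fin_cases i <;> fin_cases j <;>
        simp_all [real_inner_comm a b, real_inner_comm a (cross a b),
          real_inner_comm b (cross a b)]
  let B := (basisOfOrthonormalOfCardEqFinrank ho (by simp)).toOrthonormalBasis (by simpa using ho)
  have h := B.sum_repr' v
  simp only [Fin.sum_univ_three] at h
  simpa [B, real_inner_comm] using h.symm

/-- Differentiating a constant inner product of two vector fields along a curve. -/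
lemma inner_deriv_skew {a b : ℝ → EuclideanSpace ℝ (Fin 3)} (ha : Differentiable ℝ a)
    (hb : Differentiable ℝ b) {c : ℝ} (h : ∀ s, ⟪a s, b s⟫ = c) (s : ℝ) :
    ⟪deriv a s, b s⟫ = -⟪deriv b s, a s⟫ := by
  have h1 := (ha s).hasDerivAt.inner ℝ (hb s).hasDerivAt
  simp only [h] at h1
  have h2 := h1.unique (hasDerivAt_const s c)
  rw [real_inner_comm (a s) (deriv b s)]
  linarith

lemma differentiable_cross {a b : ℝ → EuclideanSpace ℝ (Fin 3)} (ha : Differentiable ℝ a)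
    (hb : Differentiable ℝ b) : Differentiable ℝ fun s => cross (a s) (b s) := by
  rw [differentiable_euclidean] at *
  intro i
  fin_cases i
  · exact ((ha 1).mul (hb 2)).sub ((ha 2).mul (hb 1))
  · exact ((ha 2).mul (hb 0)).sub ((ha 0).mul (hb 2))
  · exact ((ha 0).mul (hb 1)).sub ((ha 1).mul (hb 0))

/-- If the angle function `Θ` satisfies `Θ' = k_g`, then the derivative of the parallel
transport `X = cos Θ • τ - sin Θ • u` along a unit-speed curve `γ` on a surface with unit
normal `n` is `X' = (cos Θ · k_n - sin Θ · t_g) • n`. -/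
theorem stmt1 (γ n : ℝ → EuclideanSpace ℝ (Fin 3)) (Θ : ℝ → ℝ)
    (hγ : Differentiable ℝ γ) (hγ2 : Differentiable ℝ (deriv γ))
    (hn : Differentiable ℝ n) (hΘ : Differentiable ℝ Θ)
    (hγunit : ∀ s, ‖deriv γ s‖ = 1)
    (hnunit : ∀ s, ‖n s‖ = 1)
    (hnτ : ∀ s, ⟪n s, deriv γ s⟫ = 0)
    (τ u X : ℝ → EuclideanSpace ℝ (Fin 3)) (kg kn tg : ℝ → ℝ)
    (hτ : τ = deriv γ)
    (hu : ∀ s, u s = cross (n s) (τ s))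
    (hkg : ∀ s, kg s = ⟪deriv τ s, u s⟫)
    (hkn : ∀ s, kn s = ⟪deriv τ s, n s⟫)
    (htg : ∀ s, tg s = ⟪deriv n s, cross (τ s) (n s)⟫)
    (hΘ' : ∀ s, deriv Θ s = kg s)
    (hX : ∀ s, X s = Real.cos (Θ s) • τ s - Real.sin (Θ s) • u s) :
    ∀ s, deriv X s = (Real.cos (Θ s) * kn s - Real.sin (Θ s) * tg s) • n s := by
  subst hτ
  obtain rfl : u = fun s => cross (n s) (deriv γ s) := funext hu
  obtain rfl : X = _ := funext hX
  set τ := deriv γ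
  set u := fun s => cross (n s) (τ s) with hu_def
  have hud : Differentiable ℝ u := differentiable_cross hn hγ2
  intro s
  -- `⟪τ', τ⟫ = 0` and `⟪u', u⟫ = 0`, since both fields have unit length.
  have hττ := inner_deriv_skew hγ2 hγ2 (c := 1)
    (fun s => by rw [real_inner_self_eq_norm_sq, hγunit]; norm_num) s
  have huu := inner_deriv_skew hud hud (c := 1)
    (fun s => by
      rw [real_inner_self_eq_norm_sq, norm_cross_eq_one (hnunit s) (hγunit s) (hnτ s)]
      norm_num) s
  have hτu := inner_deriv_skew hγ2 hud (fun s => inner_right_cross (n s) (τ s)) s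
  have hnu := inner_deriv_skew hn hud (fun s => inner_left_cross (n s) (τ s)) s
  have ht := htg s
  rw [inner_cross_swap] at ht
  have hkgs := hkg s
  have hτ' : deriv τ s = kg s • u s + kn s • n s := by
    have h := darboux_expand (hnunit s) (hγunit s) (hnτ s) (deriv τ s)
    change _ = _ + _ + ⟪deriv τ s, u s⟫ • u s at h
    rw [← hkn, ← hkgs, show ⟪deriv τ s, deriv γ s⟫ = 0 by linarith] at h
    rw [h]; module
  have hu' : deriv u s = -kg s • τ s + tg s • n s := by
    have h := darboux_expand (hnunit s) (hγunit s) (hnτ s) (deriv u s)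
    change _ = _ + ⟪deriv u s, τ s⟫ • τ s + ⟪deriv u s, u s⟫ • u s at h
    rw [show ⟪deriv u s, n s⟫ = tg s by linarith,
      show ⟪deriv u s, τ s⟫ = -kg s by linarith, show ⟪deriv u s, u s⟫ = 0 by linarith] at h
    rw [h]; module
  have hΘs := (hΘ s).hasDerivAt
  rw [hΘ'] at hΘs
  have hXd := (hΘs.cos.smul (hγ2 s).hasDerivAt).sub (hΘs.sin.smul (hud s).hasDerivAt)
  refine hXd.deriv.trans ?_
  change Real.cos (Θ s) • deriv τ s + _ - (Real.sin (Θ s) • deriv u s + _) = _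
  rw [hτ', hu']
  module
end

section
/- Let g : ℝ² → ℝ be positive and continuously differentiable, and let r, φ : ℝ → ℝ be twice differentiable with r'(s)² + g(r(s), φ(s)) φ'(s)² = 1 and r'(s) ≠ 0 for all s. Let ω : ℝ → ℝ be differentiable with cos ω(s) ≠ 0 and tan ω(s) = √(g(r(s), φ(s))) · φ'(s) / r'(s) for all s. Then for every s, ω'(s) = k_g(s) − ∂_r(√g)(r(s), φ(s)) · φ'(s), where k_g := √g · [ (r'φ'' − φ'r'') + (1/2)( ∂_r g · φ'³ + 2 (∂_r g / g) r'² φ' + (∂_φ g / g) r' φ'² ) ] evaluated along the curve. -/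
/-! Differentiating `tan ω = √g φ' / r'` along the curve and using `1 + tan² ω = 1 / r'²`
(unit speed) gives `ω' = √g (r'φ'' - φ'r'') + (√g)' r' φ'`, where the chain rule yields
`(√g)' = (g_r r' + g_φ φ') / (2√g)`. The identity `g φ'² = 1 - r'²` shows that the difference
`k_g - (√g)_r φ'` has exactly this value. -/

/-- Partial derivative in the first (radial) variable. -/
noncomputable def pr {E : Type*} [NormedAddCommGroup E] [NormedSpace ℝ E]
    (F : ℝ → ℝ → E) (r φ : ℝ) : E := deriv (fun x => F x φ) r

/-- Partial derivative in the second (angular) variable. -/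
noncomputable def pφ {E : Type*} [NormedAddCommGroup E] [NormedSpace ℝ E]
    (F : ℝ → ℝ → E) (r φ : ℝ) : E := deriv (fun y => F r y) φ

/-- For a unit-speed curve in geodesic polar coordinates for the metric
`ds² = dr² + g dφ²`, the angle `ω` between the tangent vector and the coordinate
direction `(1,0)` satisfies `ω' = k_g - (√g)_r φ'`. -/
theorem stmt16 (g : ℝ → ℝ → ℝ)
    (hg : ContDiff ℝ 1 (fun p : ℝ × ℝ => g p.1 p.2))
    (hgpos : ∀ x y, 0 < g x y)
    (r φ ω : ℝ → ℝ)
    (hr : Differentiable ℝ r) (hr2 : Differentiable ℝ (deriv r))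
    (hφd : Differentiable ℝ φ) (hφ2 : Differentiable ℝ (deriv φ))
    (harc : ∀ s, deriv r s ^ 2 + g (r s) (φ s) * deriv φ s ^ 2 = 1)
    (hr' : ∀ s, deriv r s ≠ 0)
    (hω : Differentiable ℝ ω)
    (hcos : ∀ s, Real.cos (ω s) ≠ 0)
    (htan : ∀ s, Real.tan (ω s) =
      Real.sqrt (g (r s) (φ s)) * deriv φ s / deriv r s)
    (kg : ℝ → ℝ)
    (hkg : ∀ s, kg s =
      Real.sqrt (g (r s) (φ s)) *
        ((deriv r s * deriv (deriv φ) s - deriv φ s * deriv (deriv r) s) +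
          (1 / 2) * (pr g (r s) (φ s) * deriv φ s ^ 3 +
            2 * (pr g (r s) (φ s) / g (r s) (φ s)) * deriv r s ^ 2 * deriv φ s +
            (pφ g (r s) (φ s) / g (r s) (φ s)) * deriv r s * deriv φ s ^ 2))) :
    ∀ s, deriv ω s = kg s -
      pr (fun a b => Real.sqrt (g a b)) (r s) (φ s) * deriv φ s := by
  intro s
  have hgd := hg.differentiable one_ne_zero
  set G : ℝ × ℝ → ℝ := fun p => g p.1 p.2 with hG
  have hL := (hgd (r s, φ s)).hasFDerivAt
  set L := fderiv ℝ G (r s, φ s)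
  have hgr : HasDerivAt (fun x => g x (φ s)) (L (1, 0)) (r s) :=
    HasFDerivAt.comp_hasDerivAt (f := fun x => (x, φ s)) (r s) hL ((hasDerivAt_id (r s)).prodMk (hasDerivAt_const (r s) (φ s)))
  have hgφ : HasDerivAt (fun y => g (r s) y) (L (0, 1)) (φ s) :=
    HasFDerivAt.comp_hasDerivAt (f := fun y => (r s, y)) (φ s) hL ((hasDerivAt_const (φ s) (r s)).prodMk (hasDerivAt_id (φ s)))
  have hgpos' := hgpos (r s) (φ s)
  have hpr : pr g (r s) (φ s) = L (1, 0) := hgr.deriv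
  have hpφ : pφ g (r s) (φ s) = L (0, 1) := hgφ.deriv
  have hprs : pr (fun a b => Real.sqrt (g a b)) (r s) (φ s) =
      L (1, 0) / (2 * Real.sqrt (g (r s) (φ s))) := (hgr.sqrt hgpos'.ne').deriv
  have hgc : HasDerivAt (fun t => g (r t) (φ t))
      (L (1, 0) * deriv r s + L (0, 1) * deriv φ s) s := by
    have h : HasDerivAt (fun t => g (r t) (φ t)) (L (deriv r s, deriv φ s)) s :=
      HasFDerivAt.comp_hasDerivAt (f := fun t => (r t, φ t)) s hL ((hr s).hasDerivAt.prodMk (hφd s).hasDerivAt)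
    have e : ((deriv r s, deriv φ s) : ℝ × ℝ) =
        deriv r s • ((1, 0) : ℝ × ℝ) + deriv φ s • ((0, 1) : ℝ × ℝ) := by simp
    rw [e, map_add, map_smul, map_smul, smul_eq_mul, smul_eq_mul] at h
    convert h using 1
    ring
  have hR := ((hgc.sqrt hgpos'.ne').fun_mul (hφ2 s).hasDerivAt).fun_div (hr2 s).hasDerivAt (hr' s)
  have hT : HasDerivAt (fun t => Real.tan (ω t)) (1 / Real.cos (ω s) ^ 2 * deriv ω s) s :=
    (Real.hasDerivAt_tan (hcos s)).comp s (hω s).hasDerivAt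
  rw [funext htan] at hT
  have key := hT.unique hR
  have hq2 : Real.sqrt (g (r s) (φ s)) ^ 2 = g (r s) (φ s) := Real.sq_sqrt hgpos'.le
  have hq : Real.sqrt (g (r s) (φ s)) ≠ 0 := (Real.sqrt_pos.2 hgpos').ne'
  have ha0 := hr' s
  have ha := harc s
  -- The unit-speed condition gives `1 / cos² ω = 1 + tan² ω = 1 / r'²`.
  have hsec : 1 / Real.cos (ω s) ^ 2 = 1 / deriv r s ^ 2 := by
    rw [one_div, ← Real.inv_one_add_tan_sq (hcos s), inv_inv, htan s, div_pow, mul_pow, hq2]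
    field_simp
    exact ha
  rw [hsec] at key
  rw [hkg, hpr, hpφ, hprs]
  generalize Real.sqrt (g (r s) (φ s)) = q at *
  rw [← hq2] at ha ⊢
  generalize deriv r s = a at *
  generalize deriv φ s = b at *
  have hdω : deriv ω s = (L (1, 0) * a + L (0, 1) * b) / (2 * q) * b * a
      + q * (a * deriv (deriv φ) s - b * deriv (deriv r) s) := by
    field_simp at key ⊢
    linear_combination key
  rw [hdω]
  field_simp
  -- Unit speed turns `g g_r φ'³` into `g_r φ' (1 - r'²)`, cancelling the `∂_r √g` term.
  linear_combination (-(L (1, 0)) * b) * ha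
end

section
/- Let L > 0, δ ∈ (0, L), and K, K', c ≥ 0. Let Θ : [0, L+δ] → ℝ have finite pointwise total variation V on [0, L+δ]. Let k, t : [0, L+δ] → ℝ satisfy |k(s)| ≤ K and |t(s)| ≤ K for all s and be Lipschitz with constant K', and let n : [0, L+δ] → ℝ³ satisfy ‖n(s)‖ ≤ 1 for all s and be Lipschitz with constant c. Define Y(s) := (cos Θ(s) · k(s) − sin Θ(s) · t(s)) · n(s). Then ∫₀^L ‖Y(s+δ) − Y(s)‖ ds ≤ 2 (K·V + K'·L + K·c·L) · δ. -/
/-!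
Writing `w s` for the variation of `Θ` on the part of `[0, L + δ]` to the left of `s`, the
increment of `Θ` over `[s, s + δ]` is at most `w (s + δ) - w s`. Since `cos` and `sin` are
1-Lipschitz, the product rule for differences gives the pointwise bound
`‖Y (s + δ) - Y s‖ ≤ 2 K (w (s + δ) - w s) + 2 K' δ + 2 K c δ`.
The integral of the first term telescopes: `∫₀^L (w (s + δ) - w s) ds` equals
`∫_L^{L+δ} w - ∫₀^δ w`, which is at most `V δ` because `0 ≤ w ≤ V`.
-/

/-- The variation of `f` on the part of `S` to the left of `s`, as a real number. It is `0` when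
that variation is infinite, so it is meaningful for `f` of bounded variation on `S`. -/
noncomputable def leftVar (f : ℝ → ℝ) (S : Set ℝ) (s : ℝ) : ℝ :=
  (eVariationOn f (S ∩ Set.Iic s)).toReal

lemma leftVar_mono {f : ℝ → ℝ} {S : Set ℝ} (h : eVariationOn f S ≠ ⊤) :
    Monotone (leftVar f S) := fun _ _ hab =>
  ENNReal.toReal_mono (ne_top_of_le_ne_top h (eVariationOn.mono f Set.inter_subset_left))
    (eVariationOn.mono f (Set.inter_subset_inter_right S (Set.Iic_subset_Iic.2 hab)))

/-- Increments of `f` are dominated by increments of its left variation: this is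
superadditivity of the variation on the sets `S ∩ (-∞, a]` and `{a, b}`. -/
lemma abs_sub_le_leftVar {f : ℝ → ℝ} {S : Set ℝ} (h : eVariationOn f S ≠ ⊤) {a b : ℝ}
    (ha : a ∈ S) (hb : b ∈ S) (hab : a ≤ b) :
    |f b - f a| ≤ leftVar f S b - leftVar f S a := by
  have hfin : ∀ x, eVariationOn f (S ∩ Set.Iic x) ≠ ⊤ := fun x =>
    ne_top_of_le_ne_top h (eVariationOn.mono f Set.inter_subset_left)
  have h1 : eVariationOn f (S ∩ Set.Iic a) + edist (f a) (f b)
      ≤ eVariationOn f (S ∩ Set.Iic b) := by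
    rw [← eVariationOn.pair f a b]
    refine (eVariationOn.add_le_union f ?_).trans (eVariationOn.mono f ?_)
    · rintro x ⟨-, hx⟩ y (rfl | rfl)
      · exact hx
      · exact le_trans hx hab
    · rintro x (⟨hx, hxa⟩ | rfl | rfl)
      · exact ⟨hx, le_trans hxa hab⟩
      · exact ⟨ha, hab⟩
      · exact ⟨hb, Set.mem_Iic.2 le_rfl⟩
  have h2 := ENNReal.toReal_mono (hfin b) h1
  rw [ENNReal.toReal_add (hfin a) (edist_ne_top _ _), ← dist_edist, dist_comm,
    Real.dist_eq] at h2
  unfold leftVar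
  linarith

/-- The translation estimate for a monotone function with values in `[0, V]`. -/
lemma integral_translate_sub_le {w : ℝ → ℝ} (hw : Monotone w) {V L δ : ℝ} (hδ : 0 ≤ δ)
    (h0 : ∀ s, 0 ≤ w s) (hV : ∀ s, w s ≤ V) :
    (∫ s in (0 : ℝ)..L, (w (s + δ) - w s)) ≤ V * δ := by
  have hi : ∀ a b, IntervalIntegrable w MeasureTheory.volume a b := fun _ _ =>
    hw.intervalIntegrable
  have hw' : Monotone fun s => w (s + δ) := fun a b hab => hw (by linarith)
  rw [intervalIntegral.integral_sub hw'.intervalIntegrable (hi _ _),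
    intervalIntegral.integral_comp_add_right, zero_add]
  have e1 := intervalIntegral.integral_add_adjacent_intervals (hi 0 δ) (hi δ (L + δ))
  have e2 := intervalIntegral.integral_add_adjacent_intervals (hi 0 L) (hi L (L + δ))
  have e3 : (0 : ℝ) ≤ ∫ s in (0 : ℝ)..δ, w s :=
    intervalIntegral.integral_nonneg hδ fun s _ => h0 s
  have e4 : (∫ s in L..(L + δ), w s) ≤ ∫ _ in L..(L + δ), V :=
    intervalIntegral.integral_mono (by linarith) (hi _ _) (by simp) hV
  rw [intervalIntegral.integral_const, smul_eq_mul] at e4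
  nlinarith

/-- The product rule for differences, applied to the coefficient `cos x * k - sin x * t`. -/
lemma abs_coeff_sub_le {x x' k k' t t' K A : ℝ} (hk : |k| ≤ K) (ht : |t| ≤ K)
    (hkk : |k' - k| ≤ A) (htt : |t' - t| ≤ A) :
    |(Real.cos x' * k' - Real.sin x' * t') - (Real.cos x * k - Real.sin x * t)|
      ≤ 2 * K * |x' - x| + 2 * A := by
  have hcos : |Real.cos x' - Real.cos x| ≤ |x' - x| := Real.abs_cos_sub_cos_le x' x
  have hsin : |Real.sin x' - Real.sin x| ≤ |x' - x| := Real.abs_sin_sub_sin_le x' x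
  have b1 : |(Real.cos x' - Real.cos x) * k| ≤ |x' - x| * K := by
    rw [abs_mul]; gcongr
  have b2 : |(Real.sin x' - Real.sin x) * t| ≤ |x' - x| * K := by
    rw [abs_mul]; gcongr
  have b3 : |Real.cos x' * (k' - k)| ≤ 1 * A := by
    rw [abs_mul]; gcongr; exact Real.abs_cos_le_one x'
  have b4 : |Real.sin x' * (t' - t)| ≤ 1 * A := by
    rw [abs_mul]; gcongr; exact Real.abs_sin_le_one x'
  rw [abs_le] at *
  constructor <;> linarith [b1.1, b1.2, b2.1, b2.2, b3.1, b3.2, b4.1, b4.2]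

lemma abs_coeff_le {x k t K : ℝ} (hk : |k| ≤ K) (ht : |t| ≤ K) :
    |Real.cos x * k - Real.sin x * t| ≤ 2 * K := by
  have b1 : |Real.cos x * k| ≤ 1 * K := by
    rw [abs_mul]; gcongr; exact Real.abs_cos_le_one x
  have b2 : |Real.sin x * t| ≤ 1 * K := by
    rw [abs_mul]; gcongr; exact Real.abs_sin_le_one x
  linarith [abs_sub (Real.cos x * k) (Real.sin x * t)]

/-- Integral translation estimate for `Y = (cos Θ · k - sin Θ · t) • n`, where `Θ` has
total variation `V` on `[0, L+δ]`, `k` and `t` are bounded by `K` and `K'`-Lipschitz, and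
`n` is bounded by `1` and `c`-Lipschitz:
`∫₀^L ‖Y(s+δ) - Y(s)‖ ds ≤ 2(K·V + K'·L + K·c·L)·δ`. -/
theorem stmt17 (L δ K K' c V : ℝ)
    (hL : 0 < L) (hδ : 0 < δ) (hδL : δ < L)
    (hK : 0 ≤ K) (hK' : 0 ≤ K') (hc : 0 ≤ c) (hV : 0 ≤ V)
    (Θ k t : ℝ → ℝ) (n : ℝ → EuclideanSpace ℝ (Fin 3))
    (hΘ : eVariationOn Θ (Set.Icc 0 (L + δ)) = ENNReal.ofReal V)
    (hk : ∀ s ∈ Set.Icc (0 : ℝ) (L + δ), |k s| ≤ K)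
    (ht : ∀ s ∈ Set.Icc (0 : ℝ) (L + δ), |t s| ≤ K)
    (hkL : LipschitzOnWith (Real.toNNReal K') k (Set.Icc 0 (L + δ)))
    (htL : LipschitzOnWith (Real.toNNReal K') t (Set.Icc 0 (L + δ)))
    (hn : ∀ s ∈ Set.Icc (0 : ℝ) (L + δ), ‖n s‖ ≤ 1)
    (hnL : LipschitzOnWith (Real.toNNReal c) n (Set.Icc 0 (L + δ)))
    (Y : ℝ → EuclideanSpace ℝ (Fin 3))
    (hY : ∀ s, Y s = (Real.cos (Θ s) * k s - Real.sin (Θ s) * t s) • n s) :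
    (∫ s in (0 : ℝ)..L, ‖Y (s + δ) - Y s‖) ≤ 2 * (K * V + K' * L + K * c * L) * δ := by
  have hfin : eVariationOn Θ (Set.Icc 0 (L + δ)) ≠ ⊤ := by
    rw [hΘ]; exact ENNReal.ofReal_ne_top
  set w := leftVar Θ (Set.Icc 0 (L + δ)) with hw_def
  have hw : Monotone w := leftVar_mono hfin
  have hwV : ∀ s, w s ≤ V := fun s => by
    have := ENNReal.toReal_mono hfin
      (eVariationOn.mono Θ (Set.inter_subset_left (s := Set.Icc 0 (L + δ)) (t := Set.Iic s)))
    rwa [hΘ, ENNReal.toReal_ofReal hV] at this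
  have hw' : Monotone fun s => w (s + δ) := fun a b hab => hw (by linarith)
  have hwi : IntervalIntegrable (fun s => w (s + δ) - w s) MeasureTheory.volume 0 L :=
    hw'.intervalIntegrable.sub hw.intervalIntegrable
  have hpt : ∀ s ∈ Set.Ioc (0 : ℝ) L, ‖Y (s + δ) - Y s‖
      ≤ 2 * K * (w (s + δ) - w s) + (2 * K' * δ + 2 * K * c * δ) := by
    rintro s ⟨hs0, hsL⟩
    have hs : s ∈ Set.Icc (0 : ℝ) (L + δ) := ⟨hs0.le, by linarith⟩
    have hs' : s + δ ∈ Set.Icc (0 : ℝ) (L + δ) := ⟨by linarith, by linarith⟩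
    have hdist : dist (s + δ) s = δ := by
      rw [Real.dist_eq, add_sub_cancel_left, abs_of_pos hδ]
    have ek := hkL.dist_le_mul _ hs' _ hs
    have et := htL.dist_le_mul _ hs' _ hs
    have en := hnL.dist_le_mul _ hs' _ hs
    rw [hdist, Real.coe_toNNReal _ hK', Real.dist_eq] at ek et
    rw [hdist, Real.coe_toNNReal _ hc, dist_eq_norm] at en
    have eΘ := abs_sub_le_leftVar hfin hs hs' (by linarith)
    have d1 := abs_coeff_sub_le (x := Θ s) (x' := Θ (s + δ)) (hk s hs) (ht s hs) ek et
    have d2 := abs_coeff_le (x := Θ s) (hk s hs) (ht s hs)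
    rw [hY, hY]
    set p := Real.cos (Θ s) * k s - Real.sin (Θ s) * t s
    set q := Real.cos (Θ (s + δ)) * k (s + δ) - Real.sin (Θ (s + δ)) * t (s + δ)
    have split : q • n (s + δ) - p • n s
        = (q - p) • n (s + δ) + p • (n (s + δ) - n s) := by module
    rw [split]
    calc ‖(q - p) • n (s + δ) + p • (n (s + δ) - n s)‖
        ≤ ‖(q - p) • n (s + δ)‖ + ‖p • (n (s + δ) - n s)‖ := norm_add_le _ _
      _ = |q - p| * ‖n (s + δ)‖ + |p| * ‖n (s + δ) - n s‖ := by
          rw [norm_smul, norm_smul, Real.norm_eq_abs, Real.norm_eq_abs]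
      _ ≤ |q - p| * 1 + (2 * K) * (c * δ) := by
          gcongr
          exact hn _ hs'
      _ ≤ (2 * K * |Θ (s + δ) - Θ s| + 2 * (K' * δ)) * 1 + (2 * K) * (c * δ) := by
          gcongr
      _ ≤ (2 * K * (w (s + δ) - w s) + 2 * (K' * δ)) * 1 + (2 * K) * (c * δ) := by
          gcongr
      _ = _ := by ring
  have hgi : IntervalIntegrable
      (fun s => 2 * K * (w (s + δ) - w s) + (2 * K' * δ + 2 * K * c * δ))
      MeasureTheory.volume 0 L := (hwi.const_mul _).add (by simp)
  have hle : (∫ s in (0 : ℝ)..L, ‖Y (s + δ) - Y s‖)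
      ≤ ∫ s in (0 : ℝ)..L, (2 * K * (w (s + δ) - w s) + (2 * K' * δ + 2 * K * c * δ)) := by
    rw [intervalIntegral.integral_of_le hL.le, intervalIntegral.integral_of_le hL.le]
    -- Measurability of `Y` is never needed: monotonicity for a nonnegative integrand only asks
    -- that the dominating function be integrable.
    refine MeasureTheory.integral_mono_of_nonneg (Filter.Eventually.of_forall fun _ =>
      norm_nonneg _) hgi.1 ?_
    exact MeasureTheory.ae_restrict_of_forall_mem measurableSet_Ioc hpt
  rw [intervalIntegral.integral_add (hwi.const_mul _) (by simp),
    intervalIntegral.integral_const_mul, intervalIntegral.integral_const, smul_eq_mul,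
    sub_zero] at hle
  have htr := integral_translate_sub_le (L := L) hw hδ.le (fun _ => ENNReal.toReal_nonneg) hwV
  have hmul := mul_le_mul_of_nonneg_left htr (by positivity : 0 ≤ 2 * K)
  linarith
end

section
/- Let a < b, δ > 0, and let f : [a, b+δ] → ℝ have finite pointwise total variation on [a, b+δ]. Then ∫_a^b Var(f; [s, s+δ]) ds ≤ δ · Var(f; [a, b+δ]), where Var(f; [s, t]) denotes the pointwise total variation of f on the interval [s, t]. -/
/-!
Put `V s = Var(f; [a, s])`, a nonnegative nondecreasing function on `[a, b+δ]`. Additivity of the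
variation gives `Var(f; [s, s+δ]) = V (s+δ) - V s`, so after translating the first term the integral
telescopes to `∫_b^{b+δ} V - ∫_a^{a+δ} V`. The first integral is at most `δ · V (b+δ)` by
monotonicity, and the second is nonnegative.
-/

/-- Fubini-type translation estimate for the pointwise total variation: if `f` has finite
variation on `[a, b+δ]`, then `∫_a^b Var(f; [s, s+δ]) ds ≤ δ · Var(f; [a, b+δ])`. -/
theorem stmt18 (a b δ : ℝ) (hab : a < b) (hδ : 0 < δ) (f : ℝ → ℝ)
    (hf : BoundedVariationOn f (Set.Icc a (b + δ))) :
    (∫ s in a..b, (eVariationOn f (Set.Icc s (s + δ))).toReal) ≤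
      δ * (eVariationOn f (Set.Icc a (b + δ))).toReal := by
  set V : ℝ → ℝ := fun s => (eVariationOn f (Set.Icc a s)).toReal with hV
  have hfin : ∀ s t, a ≤ s → t ≤ b + δ → eVariationOn f (Set.Icc s t) ≠ ⊤ := fun s t hs ht =>
    hf.mono (Set.Icc_subset_Icc hs ht)
  have hmono : MonotoneOn V (Set.Icc a (b + δ)) := fun s _ t ht hst =>
    ENNReal.toReal_mono (hfin a t le_rfl ht.2)
      (eVariationOn.mono f (Set.Icc_subset_Icc_right hst))
  have hint : ∀ s ∈ Set.Icc a (b + δ), ∀ t ∈ Set.Icc a (b + δ),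
      IntervalIntegrable V MeasureTheory.volume s t := fun s hs t ht =>
    (hmono.mono (Set.uIcc_subset_Icc hs ht)).intervalIntegrable
  have ha : a ∈ Set.Icc a (b + δ) := ⟨by linarith, by linarith⟩
  have hb : b ∈ Set.Icc a (b + δ) := ⟨by linarith, by linarith⟩
  have haδ : a + δ ∈ Set.Icc a (b + δ) := ⟨by linarith, by linarith⟩
  have hbδ : b + δ ∈ Set.Icc a (b + δ) := ⟨by linarith, by linarith⟩
  have hadd : ∀ s ∈ Set.uIcc a b,
      (eVariationOn f (Set.Icc s (s + δ))).toReal = V (s + δ) - V s := by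
    intro s hs
    rw [Set.uIcc_of_le hab.le] at hs
    have h := eVariationOn.Icc_add_Icc f (s := Set.univ) hs.1
      (show s ≤ s + δ by linarith) (Set.mem_univ s)
    simp only [Set.univ_inter] at h
    simp only [hV]
    rw [← h, ENNReal.toReal_add (hfin a s le_rfl (by linarith [hs.2]))
      (hfin s (s + δ) hs.1 (by linarith [hs.2]))]
    ring
  have hshift : IntervalIntegrable (fun s => V (s + δ)) MeasureTheory.volume a b := by
    simpa using (hint _ haδ _ hbδ).comp_add_right δ
  rw [intervalIntegral.integral_congr hadd,
    intervalIntegral.integral_sub hshift (hint _ ha _ hb),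
    intervalIntegral.integral_comp_add_right V δ,
    intervalIntegral.integral_interval_sub_interval_comm' (hint _ haδ _ hbδ) (hint _ ha _ hb)
      (hint _ haδ _ ha)]
  have hlower : 0 ≤ ∫ s in a..(a + δ), V s :=
    intervalIntegral.integral_nonneg (by linarith) fun _ _ => ENNReal.toReal_nonneg
  have hupper : (∫ s in b..(b + δ), V s) ≤ ∫ _ in b..(b + δ), V (b + δ) :=
    intervalIntegral.integral_mono_on (by linarith) (hint _ hb _ hbδ) (by simp)
      fun s hs => hmono ⟨by linarith [hs.1], hs.2⟩ hbδ hs.2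
  have hconst : (∫ _ in b..(b + δ), V (b + δ)) = δ * V (b + δ) := by simp
  change _ ≤ δ * V (b + δ)
  linarith
end
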